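/- If an equation set E′ is obtained from a finite equation set E by one of the actions (1), (3), (4), (5) of MMA, or by one of the actions (5a), (5b) of MMA⁻, then E and E′ have exactly the same solutions (in particular, E is unifiable if and only if E′ is). -/

import Mathlib

/-- Finite first-order terms: variables and function applications.
A function symbol is identified by its name together with the number of
arguments it is applied to (fixed arity). -/
inductive Trm : Type where
  | var : ℕ → Trm
  | fn  : ℕ → List Trm → Trm

namespace Trm

/-- `|t|`: the number of occurrences of variables and function symbols
(including constants) in the term `t`. -/
def size : Trm → ℕ
  | .var _ => 1
  | .fn _ ts => 1 + (ts.attach.map (fun ⟨t, _⟩ => size t)).sum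
decreasing_by
  have := List.sizeOf_lt_of_mem ‹_ ∈ ts›
  simp [Trm.fn.sizeOf_spec]; omega

/-- Application of a substitution (a map from variables to terms) to a term. -/
def subst (σ : ℕ → Trm) : Trm → Trm
  | .var x => σ x
  | .fn f ts => .fn f (ts.attach.map (fun ⟨t, _⟩ => subst σ t))
decreasing_by
  have := List.sizeOf_lt_of_mem ‹_ ∈ ts›
  simp [Trm.fn.sizeOf_spec]; omega

/-- The number of occurrences of the variable `x` in a term. -/
def count (x : ℕ) : Trm → ℕ
  | .var y => if y = x then 1 else 0
  | .fn _ ts => (ts.attach.map (fun ⟨t, _⟩ => count x t)).sum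
decreasing_by
  have := List.sizeOf_lt_of_mem ‹_ ∈ ts›
  simp [Trm.fn.sizeOf_spec]; omega

/-- `Occurs x t` : the variable `x` occurs in the term `t`. -/
inductive Occurs (x : ℕ) : Trm → Prop where
  | var : Occurs x (.var x)
  | fn {f : ℕ} {ts : List Trm} {t : Trm} : t ∈ ts → Occurs x t → Occurs x (.fn f ts)

end Trm

/-- The set of variables occurring in a term. -/
def varSet (t : Trm) : Set ℕ := {x | Trm.Occurs x t}

/-- The set of variables occurring in a list (tuple) of terms. -/
def varsL (l : List Trm) : Set ℕ := {x | ∃ t ∈ l, Trm.Occurs x t}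

/-- The number of occurrences of a variable in a list (tuple) of terms. -/
def countL (x : ℕ) (l : List Trm) : ℕ := (l.map (Trm.count x)).sum

/-- A term is ground if no variable occurs in it. -/
def Ground (t : Trm) : Prop := ∀ x, ¬ Trm.Occurs x t

/-- An equation set: a set of equations `s ≐ t` between terms,
represented as pairs of terms. -/
abbrev EqSet := Set (Trm × Trm)

/-- `σ` is a solution (unifier) of the equation set `E`. -/
def Solves (σ : ℕ → Trm) (E : EqSet) : Prop :=
  ∀ e ∈ E, Trm.subst σ e.1 = Trm.subst σ e.2

/-- `E` is unifiable: it has a unifier. -/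
def Unifiable (E : EqSet) : Prop := ∃ σ, Solves σ E

/-- `θ` is a most general unifier of `E`. -/
def IsMgu (θ : ℕ → Trm) (E : EqSet) : Prop :=
  Solves θ E ∧ ∀ σ, Solves σ E → ∃ ρ, ∀ x, σ x = Trm.subst ρ (θ x)

/-- The equation set `s ≐̈ t` pairing corresponding members of two
equal-length tuples of terms. -/
def zipEqs (s t : List Trm) : EqSet := {e | e ∈ s.zip t}

/-- The substitution `{X/t}` mapping `X` to `t` and every other variable
to itself. -/
def single (X : ℕ) (t : Trm) : ℕ → Trm :=
  fun y => if y = X then t else .var y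

/-- The equation set `Eθ`: the substitution applied to both sides of
every equation of `E`. -/
def substE (θ : ℕ → Trm) (E : EqSet) : EqSet :=
  (fun e => (Trm.subst θ e.1, Trm.subst θ e.2)) '' E

/-- One step of the Martelli–Montanari algorithm MMA: actions (1), (3), (4),
(5).  (Actions (2) and (6) halt with failure and produce no next equation
set; their applicability is captured by `ClashApp` and `OccApp` below.)
Two function applications carry the same function symbol iff they have the
same name and the same number of arguments (fixed arity). -/
inductive MMAStep : EqSet → EqSet → Prop where
  /-- Action (1): replace `f(s1,…,sn) ≐ f(t1,…,tn)` by `s1 ≐ t1, …, sn ≐ tn`. -/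
  | decomp {E : EqSet} {f : ℕ} {sl tl : List Trm} :
      (Trm.fn f sl, Trm.fn f tl) ∈ E → sl.length = tl.length →
      MMAStep E ((E \ {(Trm.fn f sl, Trm.fn f tl)}) ∪ {e | e ∈ sl.zip tl})
  /-- Action (3): delete an equation `X ≐ X`. -/
  | delete {E : EqSet} {x : ℕ} :
      (Trm.var x, Trm.var x) ∈ E →
      MMAStep E (E \ {(Trm.var x, Trm.var x)})
  /-- Action (4): replace `t ≐ X` (`t` not a variable) by `X ≐ t`. -/
  | flip {E : EqSet} {t : Trm} {x : ℕ} :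
      (t, Trm.var x) ∈ E → (∀ y, t ≠ Trm.var y) →
      MMAStep E ((E \ {(t, Trm.var x)}) ∪ {(Trm.var x, t)})
  /-- Action (5): on `X ≐ t` with `X ∉ Var(t)` and `X` occurring elsewhere,
  apply `{X/t}` to all other equations. -/
  | elim {E : EqSet} {x : ℕ} {t : Trm} :
      (Trm.var x, t) ∈ E → ¬ Trm.Occurs x t →
      (∃ e ∈ E \ {(Trm.var x, t)}, Trm.Occurs x e.1 ∨ Trm.Occurs x e.2) →
      MMAStep E ({(Trm.var x, t)} ∪ substE (single x t) (E \ {(Trm.var x, t)}))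

/-- Action (2) is applicable to `E`: `E` contains an equation
`f(s1,…,sn) ≐ g(t1,…,tm)` where the two function symbols differ. -/
def ClashApp (E : EqSet) : Prop :=
  ∃ f sl g tl, (Trm.fn f sl, Trm.fn g tl) ∈ E ∧
    (f ≠ g ∨ sl.length ≠ tl.length)

/-- Action (6) (the occur-check) is applicable to `E`: `E` contains an
equation `X ≐ t` with `X ∈ Var(t)` and `X ≠ t`. -/
def OccApp (E : EqSet) : Prop :=
  ∃ x t, (Trm.var x, t) ∈ E ∧ Trm.Occurs x t ∧ t ≠ Trm.var x

/-- One step of the algorithm MMA⁻ (MMA without the occur-check):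
actions (1), (3), (4), (5a), (5b). -/
inductive MMAmStep : EqSet → EqSet → Prop where
  /-- Action (1). -/
  | decomp {E : EqSet} {f : ℕ} {sl tl : List Trm} :
      (Trm.fn f sl, Trm.fn f tl) ∈ E → sl.length = tl.length →
      MMAmStep E ((E \ {(Trm.fn f sl, Trm.fn f tl)}) ∪ {e | e ∈ sl.zip tl})
  /-- Action (3). -/
  | delete {E : EqSet} {x : ℕ} :
      (Trm.var x, Trm.var x) ∈ E →
      MMAmStep E (E \ {(Trm.var x, Trm.var x)})
  /-- Action (4). -/
  | flip {E : EqSet} {t : Trm} {x : ℕ} :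
      (t, Trm.var x) ∈ E → (∀ y, t ≠ Trm.var y) →
      MMAmStep E ((E \ {(t, Trm.var x)}) ∪ {(Trm.var x, t)})
  /-- Action (5a): on `X ≐ Y` with `X, Y` distinct variables and `X`
  occurring elsewhere, apply `{X/Y}` to all other equations. -/
  | elimVar {E : EqSet} {x y : ℕ} :
      (Trm.var x, Trm.var y) ∈ E → x ≠ y →
      (∃ e ∈ E \ {(Trm.var x, Trm.var y)}, Trm.Occurs x e.1 ∨ Trm.Occurs x e.2) →
      MMAmStep E
        ({(Trm.var x, Trm.var y)} ∪
          substE (single x (Trm.var y)) (E \ {(Trm.var x, Trm.var y)}))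
  /-- Action (5b): on `X ≐ t`, `X ≐ u` with `t, u` distinct non-variable
  terms and `|t| ≤ |u|`, replace `X ≐ u` by `t ≐ u`. -/
  | merge {E : EqSet} {x : ℕ} {t u : Trm} :
      (Trm.var x, t) ∈ E → (Trm.var x, u) ∈ E → t ≠ u →
      (∀ y, t ≠ Trm.var y) → (∀ y, u ≠ Trm.var y) → t.size ≤ u.size →
      MMAmStep E ((E \ {(Trm.var x, u)}) ∪ {(t, u)})

/-- `F` is reachable from `E` by (non-failing) actions of MMA. -/
def Reachable (E F : EqSet) : Prop := Relation.ReflTransGen MMAStep E F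

/-- `E` is NSTO: no run of MMA on `E` performs action (6), i.e. the
occur-check action is never applicable along any run. -/
def NSTO (E : EqSet) : Prop := ∀ F, Reachable E F → ¬ OccApp F

/-- `E` is WNSTO: there exists an occur-check free run of MMA on `E`, i.e. a
maximal run that either halts with failure by action (2), or ends with an
equation set to which no action (including (2) and (6)) applies — without
ever performing action (6). -/
def WNSTO (E : EqSet) : Prop :=
  ∃ F, Reachable E F ∧
    (ClashApp F ∨ (¬ ClashApp F ∧ ¬ OccApp F ∧ ∀ F', ¬ MMAStep F F'))

/-! Every action trades equations for others that are equivalent to them in the presence of the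
equations left in place. For variable elimination: if `σ` solves `X ≐ t`, then performing `{X/t}`
first and `σ` afterwards is the same as performing `σ` alone, so `σ` solves `E{X/t}` iff it
solves `E`. -/

namespace Trm

theorem subst_var (σ : ℕ → Trm) (x : ℕ) : (var x).subst σ = σ x := by
  rw [subst]

theorem subst_fn (σ : ℕ → Trm) (f : ℕ) (ts : List Trm) :
    (fn f ts).subst σ = fn f (ts.map (subst σ)) := by
  rw [subst, ← List.attach_map_val (l := ts) (f := subst σ)]

theorem subst_fn_eq_subst_fn_iff {σ : ℕ → Trm} {f : ℕ} {ss ts : List Trm} :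
    (fn f ss).subst σ = (fn f ts).subst σ ↔ ss.map (subst σ) = ts.map (subst σ) := by
  simp only [subst_fn, fn.injEq, true_and]

theorem subst_subst (σ τ : ℕ → Trm) :
    ∀ t : Trm, (t.subst τ).subst σ = t.subst fun x => (τ x).subst σ
  | var x => by simp only [subst_var]
  | fn f ts => by
    simp only [subst_fn, List.map_map, fn.injEq, true_and]
    exact List.map_congr_left fun t _ => subst_subst σ τ t

end Trm

theorem subst_single_eq_self {σ : ℕ → Trm} {x : ℕ} {t : Trm} (hx : σ x = t.subst σ) :
    (fun y => (single x t y).subst σ) = σ := by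
  funext y
  by_cases hy : y = x
  · simp only [single, hy, if_true, hx]
  · simp only [single, hy, if_false, Trm.subst_var]

section Solves

variable {σ : ℕ → Trm} {E F : EqSet}

theorem solves_singleton {e : Trm × Trm} : Solves σ {e} ↔ e.1.subst σ = e.2.subst σ :=
  forall_eq

theorem solves_union : Solves σ (E ∪ F) ↔ Solves σ E ∧ Solves σ F := by
  simp only [Solves, Set.mem_union, or_imp, forall_and]

theorem solves_substE {τ : ℕ → Trm} :
    Solves σ (substE τ E) ↔ Solves (fun x => (τ x).subst σ) E := by
  simp only [Solves, substE, Set.forall_mem_image, Trm.subst_subst]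

theorem solves_zipEqs {ss ts : List Trm} (hlen : ss.length = ts.length) :
    Solves σ (zipEqs ss ts) ↔ ss.map (Trm.subst σ) = ts.map (Trm.subst σ) := by
  rw [← List.forall₂_eq_eq_eq, List.forall₂_map_left_iff, List.forall₂_map_right_iff,
    List.forall₂_iff_zip, and_iff_right hlen]
  exact Prod.forall

theorem solves_iff_sdiff_and {e : Trm × Trm} (he : e ∈ E) :
    Solves σ E ↔ Solves σ (E \ {e}) ∧ e.1.subst σ = e.2.subst σ := by
  rw [← solves_singleton, ← solves_union,
    Set.sdiff_union_of_subset (Set.singleton_subset_iff.2 he)]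

theorem solves_iff_replace {e : Trm × Trm} (he : e ∈ E)
    (h : Solves σ (E \ {e}) → (e.1.subst σ = e.2.subst σ ↔ Solves σ F)) :
    Solves σ E ↔ Solves σ (E \ {e} ∪ F) := by
  rw [solves_iff_sdiff_and he, solves_union]
  exact and_congr_right h

theorem solves_iff_decomp {f : ℕ} {ss ts : List Trm} (he : (Trm.fn f ss, Trm.fn f ts) ∈ E)
    (hlen : ss.length = ts.length) :
    Solves σ E ↔ Solves σ (E \ {(Trm.fn f ss, Trm.fn f ts)} ∪ zipEqs ss ts) :=
  solves_iff_replace he fun _ => Trm.subst_fn_eq_subst_fn_iff.trans (solves_zipEqs hlen).symm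

theorem solves_iff_delete {t : Trm} (he : (t, t) ∈ E) :
    Solves σ E ↔ Solves σ (E \ {(t, t)}) :=
  (solves_iff_sdiff_and he).trans (and_iff_left rfl)

theorem solves_iff_flip {s t : Trm} (he : (s, t) ∈ E) :
    Solves σ E ↔ Solves σ (E \ {(s, t)} ∪ {(t, s)}) :=
  solves_iff_replace he fun _ => by rw [solves_singleton, eq_comm]

theorem solves_iff_elim {x : ℕ} {t : Trm} (he : (Trm.var x, t) ∈ E) :
    Solves σ E ↔ Solves σ ({(Trm.var x, t)} ∪ substE (single x t) (E \ {(Trm.var x, t)})) := by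
  rw [solves_iff_sdiff_and he, and_comm, solves_union, solves_singleton, Trm.subst_var]
  refine and_congr_right fun hx => ?_
  rw [solves_substE, subst_single_eq_self hx]

theorem solves_iff_merge {s t u : Trm} (ht : (s, t) ∈ E) (hu : (s, u) ∈ E) (hne : t ≠ u) :
    Solves σ E ↔ Solves σ (E \ {(s, u)} ∪ {(t, u)}) := by
  refine solves_iff_replace hu fun hrest => ?_
  have hst : s.subst σ = t.subst σ :=
    hrest (s, t) ⟨ht, fun h => hne (congrArg Prod.snd h)⟩
  rw [solves_singleton, hst]

end Solves

theorem MMAStep.solves_iff {E E' : EqSet} (h : MMAStep E E') (σ : ℕ → Trm) :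
    Solves σ E ↔ Solves σ E' := by
  cases h with
  | decomp he hlen => exact solves_iff_decomp he hlen
  | delete he => exact solves_iff_delete he
  | flip he _ => exact solves_iff_flip he
  | elim he _ _ => exact solves_iff_elim he

theorem MMAmStep.solves_iff {E E' : EqSet} (h : MMAmStep E E') (σ : ℕ → Trm) :
    Solves σ E ↔ Solves σ E' := by
  cases h with
  | decomp he hlen => exact solves_iff_decomp he hlen
  | delete he => exact solves_iff_delete he
  | flip he _ => exact solves_iff_flip he
  | elimVar he _ _ => exact solves_iff_elim he
  | merge ht hu hne _ _ _ => exact solves_iff_merge ht hu hne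

theorem stmt6_general (E E' : EqSet) (hstep : MMAStep E E' ∨ MMAmStep E E') :
    (∀ σ, Solves σ E ↔ Solves σ E') ∧ (Unifiable E ↔ Unifiable E') := by
  have hsolves : ∀ σ, Solves σ E ↔ Solves σ E' :=
    fun σ => hstep.elim (fun h => h.solves_iff σ) (fun h => h.solves_iff σ)
  exact ⟨hsolves, exists_congr hsolves⟩

/-- If an equation set `E′` is obtained from a finite equation set `E` by one of
the actions (1), (3), (4), (5) of MMA, or by one of the actions (5a), (5b)
of MMA⁻ (actions (1), (3), (4) being common to both algorithms), then `E`
and `E′` have exactly the same solutions; in particular, `E` is unifiable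
iff `E′` is. -/
theorem stmt6 (E E' : EqSet) (hfin : E.Finite)
    (hstep : MMAStep E E' ∨ MMAmStep E E') :
    (∀ σ, Solves σ E ↔ Solves σ E') ∧ (Unifiable E ↔ Unifiable E') :=
  stmt6_general E E' hstep
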